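/- arXiv:0905.1860 — 3 statements merged into one kernel-verified Lean document; each statement's English description precedes it below -/
import Mathlib

section
/- For every m ≥ 0 and d ≥ 1, the m-th moment of the rescaled Chebyshev polynomial U_d against the standard semicircle distribution equals the number of m-partite noncrossing pair partitions of {1,...,md}: (1/(2π)) ∫_{−2}^{2} U_d(x)^m √(4 − x²) dx = #{m-partite noncrossing pair partitions of [md]}. -/
/-!
Both sides count the same lattice walks.

Analytic side: the linearization formula `U_h U_d = ∑_{k ≤ min(h, d)} U_{h + d - 2k}`
(`Ucheb_mul`), iterated, expands `U_d ^ m` as a sum of `U_{H(κ)}` over the admissible sequences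
`κ = (κ_0, …, κ_{m-1})`, where step `q` moves from height `h` to `h + d - 2 κ_q` subject to
`κ_q ≤ min(h, d)` (`Ucheb_pow`). Since the semicircle law integrates `U_n` to `δ_{n,0}`
(`integral_Ucheb`), the moment is the number of admissible sequences ending at height `0`.

Combinatorial side: reading a noncrossing pair partition from left to right, each position either
opens or closes an arc, and the partition is recovered from the set of closers because the partner
of an opener at `i` is where the number of open arcs first returns to its value at `i`
(`Adapted.unique`, `exists_partition`). Having no arc inside an interval means exactly that in each
interval all closers precede all openers (`isCloser_of_lt`), so that only the number `κ_q` of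
closers in interval `q` matters. Nonnegativity of the height says `κ_q ≤ h`, and all arcs being
closed at the end says that the final height is `0`. Hence `π ↦ κ` is a bijection onto the same
set of sequences (`card_partitions_eq`).
-/

/-- `i` and `j` lie in the same block of the partition `π`. -/
def SameBlock {n : ℕ} (π : Finpartition (Finset.univ : Finset (Fin n))) (i j : Fin n) : Prop :=
  ∃ B ∈ π.parts, i ∈ B ∧ j ∈ B

/-- A partition of `{1, ..., n}` is noncrossing if there are no
`i < i' < j < j'` with `i ~ j`, `i' ~ j'` and `i ≁ i'`. -/
def IsNoncrossing {n : ℕ} (π : Finpartition (Finset.univ : Finset (Fin n))) : Prop :=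
  ∀ i i' j j' : Fin n, i < i' → i' < j → j < j' →
    SameBlock π i j → SameBlock π i' j' → SameBlock π i i'

/-- A pair partition: every block has exactly two elements. -/
def IsPairPartition {n : ℕ} (π : Finpartition (Finset.univ : Finset (Fin n))) : Prop :=
  ∀ B ∈ π.parts, B.card = 2

/-- An `m`-partite partition (with respect to the consecutive intervals of length `d`):
every block contains at most one element from each interval
`{kd+1, ..., (k+1)d}` (0-indexed: the elements `i` with `i / d = k`). -/
def IsMPartite {n : ℕ} (d : ℕ) (π : Finpartition (Finset.univ : Finset (Fin n))) : Prop :=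
  ∀ B ∈ π.parts, ∀ k : ℕ, (B.filter (fun i : Fin n => (i : ℕ) / d = k)).card ≤ 1


/-- The rescaled Chebyshev polynomial of the second kind, characterized by
`U_d(2cos θ) = sin((d+1)θ)/sin θ`, with `U_0 = 1`, `U_1 = X` and
`U_n = X·U_{n−1} − U_{n−2}`. -/
noncomputable def Ucheb : ℕ → Polynomial ℝ
  | 0 => 1
  | 1 => Polynomial.X
  | (n + 2) => Polynomial.X * Ucheb (n + 1) - Ucheb n

/-! ### Chebyshev polynomials and the semicircle integral -/

lemma Ucheb_add_two (n : ℕ) : Ucheb (n + 2) = Polynomial.X * Ucheb (n + 1) - Ucheb n := by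
  rw [Ucheb]

lemma Ucheb_one : Ucheb 1 = Polynomial.X := by rw [Ucheb]

lemma Ucheb_zero : Ucheb 0 = 1 := by rw [Ucheb]

lemma Ucheb_succ_mul_succ (a b : ℕ) :
    Ucheb (a + 1) * Ucheb (b + 1) = Ucheb a * Ucheb b + Ucheb (a + b + 2) := by
  induction a using Nat.twoStepInduction with
  | zero =>
    rw [zero_add, zero_add, Ucheb_add_two, Ucheb_one, Ucheb_zero]
    ring
  | one =>
    have h1 := Ucheb_add_two 0
    have h2 := Ucheb_add_two b
    have h3 := Ucheb_add_two (b + 1)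
    rw [show 1 + b + 2 = b + 1 + 2 by ring, h3, show (1 + 1 : ℕ) = 0 + 2 by rfl, h1,
      show b + 1 + 1 = b + 2 by rfl, h2, zero_add, Ucheb_one, Ucheb_zero]
    ring
  | more a iha ihb =>
    have h2 := Ucheb_add_two (a + b + 2)
    rw [Ucheb_add_two (a + 1), Ucheb_add_two a, show a + 2 + b + 2 = a + b + 2 + 2 by ring, h2]
    rw [show a + 1 + b + 2 = a + b + 2 + 1 by ring] at ihb
    rw [Ucheb_add_two a] at ihb
    linear_combination Polynomial.X * ihb - iha

/-- The linearization (Clebsch–Gordan) formula for products of Chebyshev polynomials; the index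
`h + d - 2 * k` never truncates on the terms that are kept. -/
lemma Ucheb_mul (d h : ℕ) : Ucheb h * Ucheb d =
    ∑ k ∈ Finset.range (d + 1), if k ≤ h then Ucheb (h + d - 2 * k) else 0 := by
  induction d generalizing h with
  | zero => simp [Ucheb_zero]
  | succ d ih =>
    rw [Finset.sum_range_succ']
    cases h with
    | zero => simp [Ucheb_zero]
    | succ h =>
      rw [Ucheb_succ_mul_succ, ih h]
      congr 1
      · refine Finset.sum_congr rfl fun k _ => ?_
        simp only [Nat.add_le_add_iff_right]
        congr 2
        omega
      · simp only [Nat.zero_le, if_true]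
        congr 1
        omega

lemma Ucheb_eval_two_cos (n : ℕ) (θ : ℝ) :
    (Ucheb n).eval (2 * Real.cos θ) * Real.sin θ = Real.sin ((n + 1 : ℕ) * θ) := by
  induction n using Nat.twoStepInduction with
  | zero => simp [Ucheb_zero]
  | one =>
    simp only [Ucheb_one, Polynomial.eval_X]
    rw [show ((1 + 1 : ℕ) : ℝ) = 2 by norm_num, Real.sin_two_mul]
    ring
  | more n iha ihb =>
    rw [Ucheb_add_two]
    simp only [Polynomial.eval_sub, Polynomial.eval_mul, Polynomial.eval_X]
    rw [sub_mul, iha, mul_assoc, ihb]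
    have h1 : ((n + 2 + 1 : ℕ) : ℝ) * θ = (n + 1 + 1 : ℕ) * θ + θ := by push_cast; ring
    have h2 : ((n + 1 : ℕ) : ℝ) * θ = (n + 1 + 1 : ℕ) * θ - θ := by push_cast; ring
    rw [h1, h2, Real.sin_add, Real.sin_sub]
    ring

lemma integral_cos_nat_mul (n : ℕ) (hn : n ≠ 0) :
    ∫ θ in (0:ℝ)..Real.pi, Real.cos (n * θ) = 0 := by
  have hn' : (n : ℝ) ≠ 0 := by exact_mod_cast hn
  rw [intervalIntegral.integral_comp_mul_left (fun x => Real.cos x) hn']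
  simp [Real.sin_nat_mul_pi]

/-- Under the semicircle law `U_0` has mean one and every other `U_n` mean zero. The substitution
`x = 2 cos θ` turns the integral into one of `4 sin ((n+1) θ) sin θ`. -/
lemma integral_Ucheb (n : ℕ) :
    ∫ x in (-2:ℝ)..2, (Ucheb n).eval x * Real.sqrt (4 - x ^ 2) =
      if n = 0 then 2 * Real.pi else 0 := by
  have hsub := intervalIntegral.integral_comp_mul_deriv (a := Real.pi) (b := 0)
    (f := fun θ => 2 * Real.cos θ) (f' := fun θ => 2 * -Real.sin θ)
    (g := fun x => (Ucheb n).eval x * Real.sqrt (4 - x ^ 2))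
    (fun x _ => (Real.hasDerivAt_cos x).const_mul 2) (by fun_prop) (by fun_prop)
  simp only [Real.cos_pi, Real.cos_zero, mul_one] at hsub
  rw [show (2 : ℝ) * -1 = -2 by norm_num] at hsub
  rw [← hsub, intervalIntegral.integral_symm]
  have hcos : ∫ θ in (0:ℝ)..Real.pi,
      ((fun x => (Ucheb n).eval x * Real.sqrt (4 - x ^ 2)) ∘ fun θ => 2 * Real.cos θ) θ *
        (2 * -Real.sin θ) =
      ∫ θ in (0:ℝ)..Real.pi,
        (2 * Real.cos ((n + 2 : ℕ) * θ) - 2 * Real.cos ((n : ℕ) * θ)) := by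
    refine intervalIntegral.integral_congr fun θ hθ => ?_
    rw [Set.uIcc_of_le Real.pi_pos.le] at hθ
    have hs : 0 ≤ Real.sin θ := Real.sin_nonneg_of_mem_Icc hθ
    have hsq : Real.sqrt (4 - (2 * Real.cos θ) ^ 2) = 2 * Real.sin θ := by
      rw [show 4 - (2 * Real.cos θ) ^ 2 = (2 * Real.sin θ) ^ 2 by
        have := Real.sin_sq_add_cos_sq θ
        nlinarith]
      exact Real.sqrt_sq (by positivity)
    have h1 : ((n + 2 : ℕ) : ℝ) * θ = (n + 1 : ℕ) * θ + θ := by push_cast; ring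
    have h2 : (n : ℝ) * θ = (n + 1 : ℕ) * θ - θ := by push_cast; ring
    simp only [Function.comp]
    rw [hsq, h1, h2, Real.cos_add, Real.cos_sub]
    linear_combination (-4 * Real.sin θ) * Ucheb_eval_two_cos n θ
  rw [hcos, intervalIntegral.integral_sub
    (Continuous.intervalIntegrable (by fun_prop) _ _)
    (Continuous.intervalIntegrable (by fun_prop) _ _),
    intervalIntegral.integral_const_mul, intervalIntegral.integral_const_mul,
    integral_cos_nat_mul (n + 2) (by omega)]
  split_ifs with h
  · subst h
    simp
  · rw [integral_cos_nat_mul n h]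
    simp

/-! ### Heights and admissible sequences -/

/-- The height after `x` letters of the `±1` word in which block `q` (the positions
`q * d, …, q * d + d - 1`) consists of `κ q` closing letters followed by opening letters. -/
def height (d : ℕ) (κ : ℕ → ℕ) (x : ℕ) : ℤ :=
  ∑ y ∈ Finset.range x, if y % d < κ (y / d) then -1 else 1

lemma height_zero (d : ℕ) (κ : ℕ → ℕ) : height d κ 0 = 0 := by simp [height]

lemma height_succ (d : ℕ) (κ : ℕ → ℕ) (x : ℕ) :
    height d κ (x + 1) = height d κ x + if x % d < κ (x / d) then -1 else 1 := by
  simp [height, Finset.sum_range_succ]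

lemma block_mod {d q r : ℕ} (hr : r < d) : (q * d + r) % d = r := by
  rw [Nat.mul_add_mod_self_right, Nat.mod_eq_of_lt hr]

lemma block_div {d q r : ℕ} (hr : r < d) : (q * d + r) / d = q := by
  rw [mul_comm, Nat.mul_add_div (by omega), Nat.div_eq_of_lt hr, add_zero]

lemma height_block_add (d : ℕ) (κ : ℕ → ℕ) (q r : ℕ) (hr : r ≤ d) :
    height d κ (q * d + r) =
      height d κ (q * d) + if r ≤ κ q then -(r : ℤ) else (r : ℤ) - 2 * κ q := by
  induction r with
  | zero => simp
  | succ r ih =>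
    rw [← add_assoc, height_succ, ih (by omega), block_mod hr, block_div hr]
    push_cast
    split_ifs <;> omega

lemma height_block_succ (d : ℕ) (κ : ℕ → ℕ) (q : ℕ) (hκ : κ q ≤ d) :
    height d κ ((q + 1) * d) = height d κ (q * d) + d - 2 * κ q := by
  rw [Nat.succ_mul, height_block_add d κ q d le_rfl]
  split_ifs <;> omega

lemma height_congr (d : ℕ) {κ κ' : ℕ → ℕ} (m : ℕ) (h : ∀ q < m, κ q = κ' q) :
    height d κ (m * d) = height d κ' (m * d) := by
  refine Finset.sum_congr rfl fun y hy => ?_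
  rw [Finset.mem_range, mul_comm] at hy
  rw [h _ (Nat.div_lt_of_lt_mul hy)]

open Classical in
/-- The admissible sequences for `m` blocks of length `d`: block `q` closes `κ q ≤ d` of the arcs
open at its start, then opens `d - κ q` new ones. Sequences are extended by `0` beyond `m`. -/
noncomputable def admissible (d : ℕ) : ℕ → Finset (ℕ → ℕ)
  | 0 => {0}
  | m + 1 => ((admissible d m ×ˢ Finset.range (d + 1)).filter
      (fun p => (p.2 : ℤ) ≤ height d p.1 (m * d))).image (fun p => Function.update p.1 m p.2)

lemma mem_admissible (d m : ℕ) (κ : ℕ → ℕ) : κ ∈ admissible d m ↔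
    (∀ q < m, κ q ≤ d ∧ (κ q : ℤ) ≤ height d κ (q * d)) ∧ ∀ q, m ≤ q → κ q = 0 := by
  induction m generalizing κ with
  | zero => simp [admissible, funext_iff]
  | succ m ih =>
    simp only [admissible, Finset.mem_image, Finset.mem_filter, Finset.mem_product,
      Finset.mem_range, Prod.exists]
    constructor
    · rintro ⟨κ', k, ⟨⟨hκ', hk⟩, hle⟩, rfl⟩
      obtain ⟨h1, h2⟩ := (ih κ').1 hκ'
      have hh : ∀ q ≤ m, height d (Function.update κ' m k) (q * d) = height d κ' (q * d) :=
        fun q hq => height_congr d q fun p hp => Function.update_of_ne (by omega) _ _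
      refine ⟨fun q hq => ?_, fun q hq => ?_⟩
      · rw [hh q (by omega)]
        rcases eq_or_ne q m with rfl | hne
        · rw [Function.update_self]
          exact ⟨by omega, hle⟩
        · rw [Function.update_of_ne hne]
          exact h1 q (by omega)
      · rw [Function.update_of_ne (by omega)]
        exact h2 q (by omega)
    · rintro ⟨h1, h2⟩
      have hh : ∀ q ≤ m, height d (Function.update κ m 0) (q * d) = height d κ (q * d) :=
        fun q hq => height_congr d q fun p hp => Function.update_of_ne (by omega) _ _
      refine ⟨Function.update κ m 0, κ m, ⟨⟨(ih _).2 ⟨fun q hq => ?_, fun q hq => ?_⟩, ?_⟩, ?_⟩, ?_⟩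
      · rw [hh q hq.le, Function.update_of_ne (by omega)]
        exact h1 q (by omega)
      · rcases eq_or_ne q m with rfl | hne
        · rw [Function.update_self]
        · rw [Function.update_of_ne hne]
          exact h2 q (by omega)
      · have := (h1 m (by omega)).1
        omega
      · rw [hh m le_rfl]
        exact (h1 m (by omega)).2
      · simp

lemma height_nonneg_of_mem_admissible {d m : ℕ} {κ : ℕ → ℕ} (h : κ ∈ admissible d m) :
    0 ≤ height d κ (m * d) := by
  cases m with
  | zero => simp [height_zero]
  | succ m =>
    obtain ⟨h1, h2⟩ := ((mem_admissible _ _ _).1 h).1 m (by omega)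
    rw [height_block_succ d κ m h1]
    omega

/-- Iterating the linearization formula expands `U_d ^ m` over admissible sequences. -/
lemma Ucheb_pow (d m : ℕ) :
    Ucheb d ^ m = ∑ κ ∈ admissible d m, Ucheb (height d κ (m * d)).toNat := by
  classical
  induction m with
  | zero => simp [admissible, height_zero, Ucheb_zero]
  | succ m ih =>
    rw [pow_succ, ih, Finset.sum_mul, admissible, Finset.sum_image, Finset.sum_filter,
      Finset.sum_product]
    · refine Finset.sum_congr rfl fun κ hκ => ?_
      rw [Ucheb_mul]
      refine Finset.sum_congr rfl fun k hk => ?_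
      rw [Finset.mem_range] at hk
      have h0 := height_nonneg_of_mem_admissible hκ
      have hh : height d (Function.update κ m k) (m * d) = height d κ (m * d) :=
        height_congr d m fun p hp => Function.update_of_ne (by omega) _ _
      have h1 := height_block_succ d (Function.update κ m k) m (by simp; omega)
      rw [hh, Function.update_self] at h1
      simp only
      rw [h1]
      by_cases hle : (k : ℤ) ≤ height d κ (m * d)
      · rw [if_pos hle, if_pos (by omega)]
        congr 1
        omega
      · rw [if_neg hle, if_neg (by omega)]
    · -- the sequence determines both its last entry and its truncation, which vanishes at `m`
      rintro ⟨κ, k⟩ h ⟨κ', k'⟩ h' heq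
      simp only [Finset.coe_filter, Finset.mem_product, Set.mem_ofPred_eq] at h h' heq
      have e := ((mem_admissible _ _ _).1 h.1.1).2 m le_rfl
      have e' := ((mem_admissible _ _ _).1 h'.1.1).2 m le_rfl
      have hk : k = k' := by simpa using congrFun heq m
      have hκ : κ = κ' := by
        funext q
        rcases eq_or_ne q m with rfl | hne
        · rw [e, e']
        · simpa [Function.update_of_ne hne] using congrFun heq q
      rw [hk, hκ]

open Classical in
lemma moment_eq_card_admissible (m d : ℕ) :
    (1 / (2 * Real.pi)) *
        ∫ x in (-2:ℝ)..2, (Ucheb d).eval x ^ m * Real.sqrt (4 - x ^ 2) =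
      (((admissible d m).filter fun κ => height d κ (m * d) = 0).card : ℝ) := by
  simp_rw [← Polynomial.eval_pow, Ucheb_pow, Polynomial.eval_finsetSum, Finset.sum_mul]
  rw [intervalIntegral.integral_finsetSum
    fun κ _ => Continuous.intervalIntegrable (by fun_prop) _ _]
  simp_rw [integral_Ucheb]
  rw [Finset.card_filter, Finset.mul_sum, Nat.cast_sum]
  refine Finset.sum_congr rfl fun κ hκ => ?_
  have h0 := height_nonneg_of_mem_admissible hκ
  by_cases h : height d κ (m * d) = 0
  · have := Real.pi_ne_zero
    simp [h]
    field_simp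
  · rw [if_neg (by omega), if_neg h]
    simp

/-! ### Blocks, closers and open arcs of a pair partition -/

section Partitions

variable {n : ℕ} {π : Finpartition (Finset.univ : Finset (Fin n))}

lemma sameBlock_iff {i j : Fin n} : SameBlock π i j ↔ i ∈ π.part j :=
  π.mem_part_iff_exists.symm

lemma SameBlock.refl (i : Fin n) : SameBlock π i i :=
  sameBlock_iff.2 (π.mem_part (Finset.mem_univ i))

lemma SameBlock.symm {i j : Fin n} (h : SameBlock π i j) : SameBlock π j i := by
  obtain ⟨B, hB, hi, hj⟩ := h
  exact ⟨B, hB, hj, hi⟩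

lemma SameBlock.trans {i j k : Fin n} (h : SameBlock π i j) (h' : SameBlock π j k) :
    SameBlock π i k := by
  obtain ⟨B, hB, hi, hj⟩ := h
  obtain ⟨C, hC, hj', hk⟩ := h'
  obtain rfl := π.eq_of_mem_parts hB hC hj hj'
  exact ⟨B, hB, hi, hk⟩

lemma finpartition_ext {π' : Finpartition (Finset.univ : Finset (Fin n))}
    (h : ∀ i j, SameBlock π i j ↔ SameBlock π' i j) : π = π' := by
  have hpart : ∀ j, π.part j = π'.part j := fun j => by
    ext i
    rw [← sameBlock_iff, ← sameBlock_iff, h]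
  have hsub : ∀ ρ ρ' : Finpartition (Finset.univ : Finset (Fin n)),
      (∀ j, ρ.part j = ρ'.part j) → ρ.parts ⊆ ρ'.parts := by
    intro ρ ρ' hρ B hB
    obtain ⟨x, hx⟩ := ρ.nonempty_of_mem_parts hB
    rw [← ρ.part_eq_of_mem hB hx, hρ x]
    exact ρ'.part_mem.2 (Finset.mem_univ x)
  exact Finpartition.ext (Finset.Subset.antisymm (hsub _ _ hpart)
    (hsub _ _ fun j => (hpart j).symm))

lemma IsPairPartition.card_part (hp : IsPairPartition π) (x : Fin n) : (π.part x).card = 2 :=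
  hp _ (π.part_mem.2 (Finset.mem_univ x))

lemma IsPairPartition.partner_unique (hp : IsPairPartition π) {x y z : Fin n}
    (hy : SameBlock π y x) (hz : SameBlock π z x) (hyx : y ≠ x) (hzx : z ≠ x) : y = z := by
  by_contra hyz
  have h3 : ({x, y, z} : Finset (Fin n)).card = 3 :=
    Finset.card_eq_three.2 ⟨x, y, z, hyx.symm, hzx.symm, hyz, rfl⟩
  have hsub : ({x, y, z} : Finset (Fin n)) ⊆ π.part x := by
    intro w hw
    simp only [Finset.mem_insert, Finset.mem_singleton] at hw
    rcases hw with rfl | rfl | rfl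
    · exact sameBlock_iff.1 (SameBlock.refl _)
    · exact sameBlock_iff.1 hy
    · exact sameBlock_iff.1 hz
  have := Finset.card_le_card hsub
  rw [hp.card_part, h3] at this
  omega

lemma IsPairPartition.exists_partner (hp : IsPairPartition π) (x : Fin n) :
    ∃ y, SameBlock π y x ∧ y ≠ x := by
  obtain ⟨y, hy, hne⟩ := Finset.exists_mem_ne (s := π.part x) (by rw [hp.card_part]; omega) x
  exact ⟨y, sameBlock_iff.2 hy, hne⟩

/-- In a pair partition: `x` is the larger element of its block. -/
def IsCloser (π : Finpartition (Finset.univ : Finset (Fin n))) (x : Fin n) : Prop :=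
  ∃ y, y < x ∧ SameBlock π y x

lemma IsPairPartition.exists_gt (hp : IsPairPartition π) {x : Fin n} (hx : ¬ IsCloser π x) :
    ∃ y, x < y ∧ SameBlock π x y := by
  obtain ⟨y, hy, hne⟩ := hp.exists_partner x
  rcases lt_or_gt_of_ne hne with h | h
  · exact absurd ⟨y, h, hy⟩ hx
  · exact ⟨y, h, hy.symm⟩

lemma IsPairPartition.not_isCloser (hp : IsPairPartition π) {x y : Fin n} (hxy : x < y)
    (h : SameBlock π x y) : ¬ IsCloser π x := by
  rintro ⟨z, hz, hzx⟩
  have := hp.partner_unique h.symm hzx hxy.ne' hz.ne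
  omega

open Classical in
/-- The left endpoints of the arcs passing over the cut between positions `k - 1` and `k`. -/
noncomputable def openArcs (π : Finpartition (Finset.univ : Finset (Fin n))) (k : ℕ) :
    Finset (Fin n) :=
  Finset.univ.filter fun x => x.val < k ∧ ∃ y : Fin n, k ≤ y.val ∧ SameBlock π x y

lemma mem_openArcs {k : ℕ} {x : Fin n} :
    x ∈ openArcs π k ↔ x.val < k ∧ ∃ y : Fin n, k ≤ y.val ∧ SameBlock π x y := by
  simp [openArcs]

lemma card_openArcs_of_isCloser (hp : IsPairPartition π) {x : Fin n} (hx : IsCloser π x) :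
    (openArcs π (x + 1)).card + 1 = (openArcs π x).card := by
  classical
  obtain ⟨y, hyx, hy⟩ := hx
  have hnot : y ∉ openArcs π (x + 1) := by
    rw [mem_openArcs]
    rintro ⟨-, z, hz, hyz⟩
    have hyz' : y < z := by rw [Fin.lt_def] at *; omega
    have := hp.partner_unique hyz.symm hy.symm hyz'.ne' hyx.ne'
    subst this
    omega
  rw [← Finset.card_insert_of_notMem hnot]
  congr 1
  ext a
  rw [Finset.mem_insert, mem_openArcs, mem_openArcs]
  constructor
  · rintro (rfl | ⟨ha, b, hb, hab⟩)
    · exact ⟨hyx, x, le_rfl, hy⟩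
    · have hax : a ≠ x := by
        rintro rfl
        have hab' : a < b := by rw [Fin.lt_def]; omega
        exact hp.not_isCloser hab' hab ⟨y, hyx, hy⟩
      exact ⟨by rw [Ne, Fin.ext_iff] at hax; omega, b, by omega, hab⟩
  · rintro ⟨ha, b, hb, hab⟩
    by_cases hbx : b = x
    · subst hbx
      exact Or.inl (hp.partner_unique hab hy (Fin.ne_of_lt ha) hyx.ne)
    · exact Or.inr ⟨by omega, b, by rw [Fin.ext_iff] at hbx; omega, hab⟩

lemma card_openArcs_of_not_isCloser (hp : IsPairPartition π) {x : Fin n} (hx : ¬ IsCloser π x) :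
    (openArcs π (x + 1)).card = (openArcs π x).card + 1 := by
  classical
  obtain ⟨y, hxy, hy⟩ := hp.exists_gt hx
  have hnot : x ∉ openArcs π x := by simp [mem_openArcs]
  rw [← Finset.card_insert_of_notMem hnot]
  congr 1
  ext a
  rw [Finset.mem_insert, mem_openArcs, mem_openArcs]
  constructor
  · rintro ⟨ha, b, hb, hab⟩
    by_cases hax : a = x
    · exact Or.inl hax
    · exact Or.inr ⟨by rw [Fin.ext_iff] at hax; omega, b, by omega, hab⟩
  · rintro (rfl | ⟨ha, b, hb, hab⟩)
    · exact ⟨by omega, y, hxy, hy⟩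
    · have hbx : b ≠ x := by
        rintro rfl
        exact hx ⟨a, ha, hab⟩
      exact ⟨by omega, b, by rw [Ne, Fin.ext_iff] at hbx; omega, hab⟩

lemma openArcs_zero : openArcs π 0 = ∅ := by
  ext x
  simp [mem_openArcs]

lemma openArcs_length : openArcs π n = ∅ := by
  ext x
  simp only [mem_openArcs, Finset.notMem_empty, iff_false, not_and, not_exists]
  intro _ y hy
  omega

/-- The arcs open just before `i` survive until its partner `j` has been passed, and `i` itself is
open in between; this is where noncrossingness enters. -/
lemma card_openArcs_lt (hnc : IsNoncrossing π) (hp : IsPairPartition π) {i j : Fin n}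
    (hij : i < j) (h : SameBlock π i j) {k : ℕ} (hik : i.val < k) (hkj : k ≤ j.val) :
    (openArcs π i).card < (openArcs π k).card := by
  apply Finset.card_lt_card
  rw [Finset.ssubset_iff_of_subset]
  · refine ⟨i, mem_openArcs.2 ⟨hik, j, hkj, h⟩, by simp [mem_openArcs]⟩
  · intro a ha
    rw [mem_openArcs] at ha ⊢
    obtain ⟨hai, b, hib, hab⟩ := ha
    refine ⟨by omega, b, ?_, hab⟩
    by_contra hbk
    have hbi : b ≠ i := by
      rintro rfl
      exact hp.not_isCloser hij h ⟨a, hai, hab⟩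
    have hbi' : i < b := by
      rw [Ne, Fin.ext_iff] at hbi
      rw [Fin.lt_def]
      omega
    exact hp.not_isCloser hij h
      ⟨a, hai, hnc a i b j hai hbi' (by rw [Fin.lt_def]; omega) hab h⟩

lemma card_openArcs_eq (hnc : IsNoncrossing π) (hp : IsPairPartition π) {i j : Fin n}
    (hij : i < j) (h : SameBlock π i j) :
    (openArcs π (j + 1)).card = (openArcs π i).card := by
  have hcl : IsCloser π j := ⟨i, hij, h⟩
  congr 1
  ext a
  rw [mem_openArcs, mem_openArcs]
  constructor
  · rintro ⟨haj, b, hjb, hab⟩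
    have hab' : a < b := by rw [Fin.lt_def]; omega
    have hai : a ≠ i := by
      rintro rfl
      have := hp.partner_unique hab.symm h.symm hab'.ne' hij.ne'
      subst this
      omega
    have haj' : a ≠ j := by
      rintro rfl
      exact hp.not_isCloser hab' hab hcl
    rw [Ne, Fin.ext_iff] at hai haj'
    refine ⟨?_, b, by rw [Fin.lt_def] at hij; omega, hab⟩
    by_contra hlt
    have hia : i < a := by rw [Fin.lt_def]; omega
    have haj2 : a < j := by rw [Fin.lt_def]; omega
    have hs := hnc i a j b hia haj2 hjb h hab
    have := hp.partner_unique hs.symm h.symm hia.ne' hij.ne'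
    omega
  · rintro ⟨hai, b, hib, hab⟩
    have hbi : b ≠ i := by
      rintro rfl
      exact hp.not_isCloser hij h ⟨a, hai, hab⟩
    have hbi' : i < b := by
      rw [Ne, Fin.ext_iff] at hbi
      rw [Fin.lt_def]
      omega
    have hbj : b ≠ j := by
      rintro rfl
      have := hp.partner_unique hab h (hbi'.trans' hai).ne hij.ne
      subst this
      omega
    rw [Fin.lt_def] at hij
    refine ⟨by omega, b, ?_, hab⟩
    by_contra hlt
    rw [Ne, Fin.ext_iff] at hbj
    have hbj' : b < j := by rw [Fin.lt_def]; omega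
    exact hp.not_isCloser hij h ⟨a, hai, hnc a i b j hai hbi' hbj' hab h⟩

/-! ### Matching by heights -/

/-- `j` is the position of the letter closing the one opened at `i`, for a word with height
function `g`: the first return to height `g i` after `i` occurs right after `j`. -/
def Matched (g : ℕ → ℤ) (i j : ℕ) : Prop :=
  i < j ∧ g (j + 1) = g i ∧ ∀ k, i < k → k ≤ j → g i < g k

lemma Matched.right_unique {g : ℕ → ℤ} {i j j' : ℕ} (h : Matched g i j) (h' : Matched g i j') :
    j = j' := by
  rcases lt_trichotomy j j' with hlt | rfl | hlt
  · have := h'.2.2 (j + 1) (by have := h.1; omega) hlt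
    have := h.2.1
    omega
  · rfl
  · have := h.2.2 (j' + 1) (by have := h'.1; omega) hlt
    have := h'.2.1
    omega

lemma Matched.left_unique {g : ℕ → ℤ} {i i' j : ℕ} (h : Matched g i j) (h' : Matched g i' j) :
    i = i' := by
  have e := h.2.1
  have e' := h'.2.1
  rcases lt_trichotomy i i' with hlt | rfl | hlt
  · have := h.2.2 i' hlt h'.1.le
    omega
  · rfl
  · have := h'.2.2 i hlt h.1.le
    omega

lemma Matched.chain_false {g : ℕ → ℤ} {i j k : ℕ} (h : Matched g i j) (h' : Matched g j k) :
    False := by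
  have h1 := h.2.1
  have h2 := h.2.2 j h.1 le_rfl
  have h3 := h'.2.2 (j + 1) (by omega) h'.1
  omega

/-- The closers of `π` are exactly the first `κ q` positions of each block `q`. -/
def Adapted (d : ℕ) (κ : ℕ → ℕ) (π : Finpartition (Finset.univ : Finset (Fin n))) : Prop :=
  ∀ x : Fin n, IsCloser π x ↔ x.val % d < κ (x.val / d)

variable {d : ℕ} {κ : ℕ → ℕ}

lemma Adapted.card_openArcs (ha : Adapted d κ π) (hp : IsPairPartition π) {k : ℕ} (hk : k ≤ n) :
    ((openArcs π k).card : ℤ) = height d κ k := by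
  induction k with
  | zero => simp [openArcs_zero, height_zero]
  | succ k ih =>
    have ih := ih (by omega)
    have hx := ha ⟨k, hk⟩
    rw [height_succ, ← ih]
    by_cases hc : IsCloser π ⟨k, hk⟩
    · have := card_openArcs_of_isCloser hp hc
      rw [if_pos (hx.1 hc)]
      simp only at this
      omega
    · have := card_openArcs_of_not_isCloser hp hc
      rw [if_neg (fun h => hc (hx.2 h))]
      simp only at this
      omega

lemma Adapted.matched (ha : Adapted d κ π) (hnc : IsNoncrossing π) (hp : IsPairPartition π)
    {i j : Fin n} (hij : i < j) (h : SameBlock π i j) : Matched (height d κ) i j := by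
  refine ⟨hij, ?_, fun k hik hkj => ?_⟩
  · rw [← ha.card_openArcs hp j.isLt, ← ha.card_openArcs hp i.isLt.le]
    exact_mod_cast card_openArcs_eq hnc hp hij h
  · rw [← ha.card_openArcs hp (show k ≤ n by omega), ← ha.card_openArcs hp i.isLt.le]
    exact_mod_cast card_openArcs_lt hnc hp hij h hik hkj

/-- A noncrossing pair partition is determined by its set of closers. -/
lemma Adapted.unique {π' : Finpartition (Finset.univ : Finset (Fin n))} (ha : Adapted d κ π)
    (hnc : IsNoncrossing π) (hp : IsPairPartition π) (ha' : Adapted d κ π')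
    (hnc' : IsNoncrossing π') (hp' : IsPairPartition π') : π = π' := by
  have key : ∀ ρ ρ' : Finpartition (Finset.univ : Finset (Fin n)), Adapted d κ ρ →
      IsNoncrossing ρ → IsPairPartition ρ → Adapted d κ ρ' → IsNoncrossing ρ' →
      IsPairPartition ρ' → ∀ i j, i < j → SameBlock ρ i j → SameBlock ρ' i j := by
    intro ρ ρ' h1 h2 h3 h1' h2' h3' i j hij h
    have hop : ¬ IsCloser ρ' i := by
      rw [h1' i, ← h1 i]
      exact h3.not_isCloser hij h
    obtain ⟨j', hij', h'⟩ := h3'.exists_gt hop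
    have := (h1.matched h2 h3 hij h).right_unique (h1'.matched h2' h3' hij' h')
    rw [Fin.ext this]
    exact h'
  have key2 : ∀ ρ ρ' : Finpartition (Finset.univ : Finset (Fin n)), Adapted d κ ρ →
      IsNoncrossing ρ → IsPairPartition ρ → Adapted d κ ρ' → IsNoncrossing ρ' →
      IsPairPartition ρ' → ∀ i j, SameBlock ρ i j → SameBlock ρ' i j := by
    intro ρ ρ' h1 h2 h3 h1' h2' h3' i j h
    rcases lt_trichotomy i j with hlt | rfl | hlt
    · exact key ρ ρ' h1 h2 h3 h1' h2' h3' i j hlt h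
    · exact SameBlock.refl _
    · exact (key ρ ρ' h1 h2 h3 h1' h2' h3' j i hlt h.symm).symm
  exact finpartition_ext fun i j =>
    ⟨key2 π π' ha hnc hp ha' hnc' hp' i j, key2 π' π ha' hnc' hp' ha hnc hp i j⟩

/-! ### From partitions to admissible sequences -/

lemma IsMPartite.false_of_sameBlock (hm : IsMPartite d π) {i j : Fin n} (hij : i < j)
    (h : SameBlock π i j) (hd : i.val / d = j.val / d) : False := by
  obtain ⟨B, hB, hi, hj⟩ := h
  have := Finset.card_le_one.1 (hm B hB (j.val / d)) i (by simp [hi, hd]) j (by simp [hj])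
  omega

/-- Within an interval, every closer precedes every opener. -/
lemma isCloser_of_lt (hnc : IsNoncrossing π) (hp : IsPairPartition π) (hm : IsMPartite d π)
    {i j : Fin n} (hij : i < j) (hd : i.val / d = j.val / d) (hj : IsCloser π j) :
    IsCloser π i := by
  by_contra hi
  obtain ⟨p, hip, hp'⟩ := hp.exists_gt hi
  obtain ⟨q, hqj, hq⟩ := hj
  have hqi : q < i := by
    by_contra hle
    rw [not_lt] at hle
    have h1 : i.val / d ≤ q.val / d := Nat.div_le_div_right hle
    have h2 : q.val / d ≤ j.val / d := Nat.div_le_div_right hqj.le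
    exact hm.false_of_sameBlock hqj hq (by omega)
  have hjp : j < p := by
    by_contra hle
    rw [not_lt] at hle
    have h1 : i.val / d ≤ p.val / d := Nat.div_le_div_right hip.le
    have h2 : p.val / d ≤ j.val / d := Nat.div_le_div_right hle
    exact hm.false_of_sameBlock hip hp' (by omega)
  exact hi ⟨q, hqi, hnc q i j p hqi hij hjp hq hp'⟩

lemma mem_iff_lt_card_of_downward {T : Finset ℕ} (hT : ∀ r ∈ T, ∀ s < r, s ∈ T) (r : ℕ) :
    r ∈ T ↔ r < T.card := by
  constructor
  · intro hr
    have hsub : Finset.range (r + 1) ⊆ T := fun s hs => by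
      rw [Finset.mem_range, Nat.lt_succ_iff_lt_or_eq] at hs
      rcases hs with hs | rfl
      · exact hT r hr s hs
      · exact hr
    simpa using Finset.card_le_card hsub
  · intro hr
    by_contra hnot
    have hsub : T ⊆ Finset.range r := fun s hs => by
      rw [Finset.mem_range]
      by_contra hle
      rcases (not_lt.1 hle).lt_or_eq with hlt | rfl
      · exact hnot (hT s hs r hlt)
      · exact hnot hs
    have := Finset.card_le_card hsub
    rw [Finset.card_range] at this
    omega

lemma block_lt {m d q r : ℕ} (hq : q < m) (hr : r < d) : q * d + r < m * d := by
  have : (q + 1) * d ≤ m * d := Nat.mul_le_mul_right d hq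
  rw [Nat.succ_mul] at this
  omega

/-- The sequence attached to `π` counts the closers of each interval. -/
lemma exists_adapted {m d : ℕ} (hd : 1 ≤ d)
    {π : Finpartition (Finset.univ : Finset (Fin (m * d)))}
    (hnc : IsNoncrossing π) (hp : IsPairPartition π) (hm : IsMPartite d π) :
    ∃ κ, κ ∈ admissible d m ∧ height d κ (m * d) = 0 ∧ Adapted d κ π := by
  classical
  set T : ℕ → Finset ℕ := fun q => (Finset.range d).filter
    fun r => ∃ h : q * d + r < m * d, IsCloser π ⟨q * d + r, h⟩ with hT
  have hmem : ∀ q r, r ∈ T q ↔ r < d ∧ ∃ h : q * d + r < m * d, IsCloser π ⟨q * d + r, h⟩ := by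
    intro q r
    simp [hT]
  have hdown : ∀ q, ∀ r ∈ T q, ∀ s < r, s ∈ T q := by
    intro q r hr s hs
    obtain ⟨hrd, hlt, hc⟩ := (hmem q r).1 hr
    refine (hmem q s).2 ⟨by omega, by omega, ?_⟩
    refine isCloser_of_lt hnc hp hm (by rw [Fin.lt_def]; simp only; omega) ?_ hc
    simp only
    rw [block_div hrd, block_div (by omega)]
  have had : Adapted d (fun q => (T q).card) π := by
    intro x
    rw [← mem_iff_lt_card_of_downward (hdown _), hmem]
    have hx : x.val / d * d + x.val % d = x.val := Nat.div_add_mod' _ _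
    constructor
    · intro h
      refine ⟨Nat.mod_lt _ (by omega), by omega, ?_⟩
      convert h using 2
    · rintro ⟨-, hlt, h⟩
      convert h using 2
      exact hx.symm
  have hle : ∀ q, (T q).card ≤ d := fun q => by
    simpa using Finset.card_filter_le (Finset.range d)
      (fun r => ∃ h : q * d + r < m * d, IsCloser π ⟨q * d + r, h⟩)
  refine ⟨_, (mem_admissible _ _ _).2 ⟨fun q hq => ⟨hle q, ?_⟩, fun q hq => ?_⟩, ?_, had⟩
  · -- after the closers of block `q`, the number of open arcs is still a natural number
    have h1 := height_block_add d (fun q => (T q).card) q (T q).card (hle q)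
    have hk : q * d + (T q).card ≤ m * d := by
      have : (q + 1) * d ≤ m * d := Nat.mul_le_mul_right d hq
      rw [Nat.succ_mul] at this
      have := hle q
      omega
    rw [← had.card_openArcs hp hk, if_pos le_rfl] at h1
    omega
  · rw [Finset.card_eq_zero, Finset.eq_empty_iff_forall_notMem]
    intro r hr
    obtain ⟨-, hlt, -⟩ := (hmem q r).1 hr
    have : m * d ≤ q * d := Nat.mul_le_mul_right d hq
    omega
  · rw [← had.card_openArcs hp le_rfl, openArcs_length]
    simp

lemma Adapted.seq_unique {m d : ℕ} {π : Finpartition (Finset.univ : Finset (Fin (m * d)))}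
    {κ κ' : ℕ → ℕ} (ha : Adapted d κ π) (ha' : Adapted d κ' π) (hκ : κ ∈ admissible d m)
    (hκ' : κ' ∈ admissible d m) : κ = κ' := by
  rw [mem_admissible] at hκ hκ'
  funext q
  by_cases hq : q < m
  · have hiff : ∀ r < d, r < κ q ↔ r < κ' q := fun r hr => by
      have h1 := ha ⟨q * d + r, block_lt hq hr⟩
      have h2 := ha' ⟨q * d + r, block_lt hq hr⟩
      simp only [block_mod hr, block_div hr] at h1 h2
      rw [← h1, ← h2]
    have b1 := (hκ.1 q hq).1
    have b2 := (hκ'.1 q hq).1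
    rcases lt_trichotomy (κ q) (κ' q) with h | h | h
    · have := hiff (κ q) (by omega)
      omega
    · exact h
    · have := hiff (κ' q) (by omega)
      omega
  · rw [hκ.2 q (by omega), hκ'.2 q (by omega)]

/-! ### From admissible sequences to partitions -/

lemma height_nonneg {m d : ℕ} (hd : 1 ≤ d) {κ : ℕ → ℕ} (hκ : κ ∈ admissible d m)
    {x : ℕ} (hx : x < m * d) : 0 ≤ height d κ x := by
  have hq : x / d < m := Nat.div_lt_of_lt_mul (by rwa [mul_comm] at hx)
  obtain ⟨h1, h2⟩ := ((mem_admissible _ _ _).1 hκ).1 _ hq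
  have h3 := height_block_add d κ (x / d) (x % d) (Nat.mod_lt _ (by omega)).le
  rw [Nat.div_add_mod'] at h3
  rw [h3]
  split_ifs <;> omega

lemma exists_matched_right {d : ℕ} {κ : ℕ → ℕ} {n i : ℕ} (hin : i < n)
    (hi : ¬ i % d < κ (i / d)) (h0 : 0 ≤ height d κ i) (hn : height d κ n = 0) :
    ∃ j < n, Matched (height d κ) i j := by
  classical
  have hex : ∃ k, i < k ∧ height d κ k ≤ height d κ i := ⟨n, hin, by omega⟩
  obtain ⟨h1, h2⟩ := Nat.find_spec hex
  have hmin : ∀ l, i < l → l < Nat.find hex → height d κ i < height d κ l := fun l hl hlt => by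
    by_contra hle
    exact Nat.find_min hex hlt ⟨hl, not_lt.1 hle⟩
  have hle : Nat.find hex ≤ n := Nat.find_min' hex ⟨hin, by omega⟩
  generalize Nat.find hex = k at *
  obtain ⟨j, rfl⟩ : ∃ j, k = j + 1 := ⟨k - 1, by omega⟩
  have hsi := height_succ d κ i
  rw [if_neg hi] at hsi
  have hij : i ≠ j := by
    rintro rfl
    omega
  refine ⟨j, by omega, by omega, ?_, fun l hl hlj => hmin l hl (by omega)⟩
  have := hmin j (by omega) (by omega)
  have hsj := height_succ d κ j
  split_ifs at hsj <;> omega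

lemma exists_matched_left {d : ℕ} {κ : ℕ → ℕ} {j : ℕ}
    (hj : j % d < κ (j / d)) (h1 : 0 ≤ height d κ (j + 1)) :
    ∃ i, Matched (height d κ) i j := by
  classical
  set P : ℕ → Prop := fun k => height d κ k ≤ height d κ (j + 1) with hP
  have hP0 : P 0 := by
    rw [hP]
    simpa [height_zero] using h1
  have hspec : P (Nat.findGreatest P j) := Nat.findGreatest_spec (Nat.zero_le j) hP0
  have hmax : ∀ l, Nat.findGreatest P j < l → l ≤ j → height d κ (j + 1) < height d κ l :=
    fun l hl hlj => not_le.1 (Nat.findGreatest_is_greatest hl hlj)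
  have hle : Nat.findGreatest P j ≤ j := Nat.findGreatest_le j
  generalize Nat.findGreatest P j = i at *
  have hsj := height_succ d κ j
  rw [if_pos hj] at hsj
  rw [hP] at hspec
  have hij : i ≠ j := by
    rintro rfl
    omega
  have heq : height d κ (j + 1) = height d κ i := by
    have := hmax (i + 1) (by omega) (by omega)
    have hsi := height_succ d κ i
    split_ifs at hsi <;> omega
  exact ⟨i, by omega, heq, fun l hl hlj => heq ▸ hmax l hl hlj⟩

/-- The partition attached to `κ` has as its blocks the pairs matched by the heights of the word
of `κ`. -/
lemma exists_partition {m d : ℕ} (hd : 1 ≤ d) {κ : ℕ → ℕ} (hκ : κ ∈ admissible d m)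
    (h0 : height d κ (m * d) = 0) :
    ∃ π : Finpartition (Finset.univ : Finset (Fin (m * d))),
      (IsNoncrossing π ∧ IsPairPartition π ∧ IsMPartite d π) ∧ Adapted d κ π := by
  classical
  set g := height d κ with hg
  have hnn : ∀ x ≤ m * d, 0 ≤ g x := fun x hx => by
    rcases hx.lt_or_eq with h | rfl
    · exact height_nonneg hd hκ h
    · exact h0.ge
  let s : Setoid (Fin (m * d)) :=
    { r := fun x y => x = y ∨ Matched g x y ∨ Matched g y x
      iseqv :=
        { refl := fun x => Or.inl rfl
          symm := by
            rintro x y (h | h | h)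
            · exact Or.inl h.symm
            · exact Or.inr (Or.inr h)
            · exact Or.inr (Or.inl h)
          trans := by
            rintro x y z (rfl | h | h) (rfl | h' | h')
            · exact Or.inl rfl
            · exact Or.inr (Or.inl h')
            · exact Or.inr (Or.inr h')
            · exact Or.inr (Or.inl h)
            · exact (h.chain_false h').elim
            · exact Or.inl (Fin.ext (h.left_unique h'))
            · exact Or.inr (Or.inr h)
            · exact Or.inl (Fin.ext (h.right_unique h'))
            · exact (h'.chain_false h).elim } }
  have hsb : ∀ x y, SameBlock (Finpartition.ofSetoid s) x y ↔
      x = y ∨ Matched g x y ∨ Matched g y x := fun x y => by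
    rw [sameBlock_iff, Finpartition.mem_part_ofSetoid_iff_rel]
    exact ⟨fun h => s.symm h, fun h => s.symm h⟩
  have hlt : ∀ x y : Fin (m * d), x < y →
      (SameBlock (Finpartition.ofSetoid s) x y ↔ Matched g x y) := fun x y hxy => by
    rw [hsb]
    refine ⟨?_, fun h => Or.inr (Or.inl h)⟩
    rintro (rfl | h | h)
    · exact absurd hxy (lt_irrefl _)
    · exact h
    · exact absurd h.1 (not_lt.2 hxy.le)
  have hclose : ∀ {i j : ℕ}, Matched g i j → j % d < κ (j / d) := fun {i j} h => by
    by_contra hc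
    have h1 := height_succ d κ j
    rw [if_neg hc, ← hg] at h1
    have h2 := h.2.1
    have h3 := h.2.2 j h.1 le_rfl
    omega
  have hopen : ∀ {i j : ℕ}, Matched g i j → ¬ i % d < κ (i / d) := fun {i j} h hc => by
    have h1 := height_succ d κ i
    rw [if_pos hc, ← hg] at h1
    have h3 := h.2.2 (i + 1) (by omega) h.1
    omega
  have hpartner : ∀ x : Fin (m * d), ∃ y : Fin (m * d), Matched g x y ∨ Matched g y x := by
    intro x
    by_cases hx : x.val % d < κ (x.val / d)
    · obtain ⟨i, hi⟩ := exists_matched_left hx (hnn _ x.isLt)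
      exact ⟨⟨i, hi.1.trans x.isLt⟩, Or.inr hi⟩
    · obtain ⟨j, hj, hj'⟩ := exists_matched_right x.isLt hx (hnn _ x.isLt.le) h0
      exact ⟨⟨j, hj⟩, Or.inl hj'⟩
  have hne : ∀ {x y : Fin (m * d)}, Matched g x y ∨ Matched g y x → x ≠ y := by
    rintro x y h rfl
    rcases h with h | h <;> exact lt_irrefl _ h.1
  refine ⟨Finpartition.ofSetoid s, ⟨?_, ?_, ?_⟩, ?_⟩
  · intro i i' j j' h1 h2 h3 hij hij'
    have m1 := (hlt i j (h1.trans h2)).1 hij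
    have m2 := (hlt i' j' (h2.trans h3)).1 hij'
    have a1 := m1.2.2 i' h1 h2.le
    have a2 := m2.2.2 (j + 1) (by rw [Fin.lt_def] at h2; omega) h3
    have a3 := m1.2.1
    omega
  · intro B hB
    obtain ⟨x, hx⟩ := Finpartition.nonempty_of_mem_parts _ hB
    obtain ⟨y, hy⟩ := hpartner x
    rw [Finset.card_eq_two]
    refine ⟨x, y, hne hy, ?_⟩
    rw [← Finpartition.part_eq_of_mem _ hB hx]
    ext z
    rw [← sameBlock_iff, Finset.mem_insert, Finset.mem_singleton]
    constructor
    · intro hz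
      by_cases hzx : z = x
      · exact Or.inl hzx
      · refine Or.inr (Fin.ext ?_)
        rcases (hsb z x).1 hz with h | h | h
        · exact absurd h hzx
        · rcases hy with hy | hy
          · exact (h.chain_false hy).elim
          · exact h.left_unique hy
        · rcases hy with hy | hy
          · exact h.right_unique hy
          · exact (hy.chain_false h).elim
    · rintro (rfl | rfl)
      · exact SameBlock.refl _
      · exact (hsb _ _).2 (Or.inr hy.symm)
  · intro B hB k
    rw [Finset.card_le_one]
    have key : ∀ a b : Fin (m * d), a < b → a ∈ B → b ∈ B → a.val / d = k → b.val / d = k →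
        False := by
      intro a b hab ha hb hak hbk
      have hM := (hlt a b hab).1 ⟨B, hB, ha, hb⟩
      have c1 := hclose hM
      have c2 := hopen hM
      rw [hak] at c2
      rw [hbk] at c1
      have e1 := Nat.div_add_mod' a.val d
      have e2 := Nat.div_add_mod' b.val d
      rw [hak] at e1
      rw [hbk] at e2
      rw [Fin.lt_def] at hab
      omega
    intro a ha b hb
    rw [Finset.mem_filter] at ha hb
    rcases lt_trichotomy a b with h | h | h
    · exact (key a b h ha.1 hb.1 ha.2 hb.2).elim
    · exact h
    · exact (key b a h hb.1 ha.1 hb.2 ha.2).elim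
  · intro x
    constructor
    · rintro ⟨y, hyx, hy⟩
      exact hclose ((hlt y x hyx).1 hy)
    · intro hx
      obtain ⟨y, hy | hy⟩ := hpartner x
      · exact absurd hx (hopen hy)
      · exact ⟨y, hy.1, (hlt y x hy.1).2 hy⟩

end Partitions

open Classical in
lemma card_partitions_eq (m d : ℕ) (hd : 1 ≤ d) :
    Nat.card {π : Finpartition (Finset.univ : Finset (Fin (m * d))) //
        IsNoncrossing π ∧ IsPairPartition π ∧ IsMPartite d π} =
      ((admissible d m).filter fun κ => height d κ (m * d) = 0).card := by
  choose f hf using fun π : {π : Finpartition (Finset.univ : Finset (Fin (m * d))) //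
      IsNoncrossing π ∧ IsPairPartition π ∧ IsMPartite d π} =>
    exists_adapted hd π.2.1 π.2.2.1 π.2.2.2
  rw [← Fintype.card_coe, ← Nat.card_eq_fintype_card]
  refine Nat.card_eq_of_bijective
    (fun π => ⟨f π, Finset.mem_filter.2 ⟨(hf π).1, (hf π).2.1⟩⟩) ⟨?_, ?_⟩
  · intro π π' h
    have h' : f π = f π' := congrArg Subtype.val h
    have ha := (hf π).2.2
    rw [h'] at ha
    exact Subtype.ext (ha.unique π.2.1 π.2.2.1 (hf π').2.2 π'.2.1 π'.2.2.1)
  · rintro ⟨κ, hκ⟩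
    obtain ⟨hκ1, hκ2⟩ := Finset.mem_filter.1 hκ
    obtain ⟨π, hπ, ha⟩ := exists_partition hd hκ1 hκ2
    exact ⟨⟨π, hπ⟩, Subtype.ext ((hf ⟨π, hπ⟩).2.2.seq_unique ha (hf ⟨π, hπ⟩).1 hκ1)⟩

/-- The `m`-th moment of the rescaled Chebyshev polynomial `U_d` against the standard
semicircle distribution equals the number of `m`-partite noncrossing pair partitions
of `{1, ..., md}`. -/
theorem chebyshev_moment_eq_card_noncrossing (m d : ℕ) (hd : 1 ≤ d) :
    (1 / (2 * Real.pi)) *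
        ∫ x in (-2:ℝ)..2, (Ucheb d).eval x ^ m * Real.sqrt (4 - x ^ 2) =
      (Nat.card {π : Finpartition (Finset.univ : Finset (Fin (m * d))) //
        IsNoncrossing π ∧ IsPairPartition π ∧ IsMPartite d π} : ℝ) := by 
  rw [moment_eq_card_admissible, card_partitions_eq m d hd]
end

section
/- (First Fundamental Theorem for SL(2,ℂ).) Let V = ℂ² with the standard action of G = SL(2,ℂ) and the dual action on V* given by ⟨g·v*, v⟩ = ⟨v*, g⁻¹v⟩. Every multilinear functional f : (V*)^m × V^n → ℂ that is invariant under the diagonal G-action is a linear combination of products of the elementary invariants ⟨v_i*, w_j⟩ (dual pairing), [v_i*, v_j*] (determinant bracket on V*), and [w_i, w_j] (determinant bracket on V), where in each such product every one of the m + n argument slots occurs exactly once. -/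
/-!
The spaces `V` and `V*` are isomorphic as `SL(2,ℂ)`-modules, by an isomorphism turning the dual
pairing and the bracket on `V*` into the bracket on `V`. It therefore suffices to treat an invariant
multilinear form `f` on `V^N`, and to show that it is a combination of products of brackets
(`IsSLInvariant.mem_matchingSpan`). This goes by induction on `N`.

For slots `i ≠ j`, the difference of `f` and `f` with these slots exchanged is alternating in them,
so it equals `[x i, x j]` times an invariant form in the other `N - 2` slots
(`map_insertPair_sub_swap`, `IsSLInvariant.contractPair`), and lies in the span by induction. Since
transpositions generate the symmetric group, `f` is congruent modulo the span to each of its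
permutations, hence to its symmetrization. The symmetrization is the polarization of
`v ↦ f(v,…,v)`, and this function vanishes for `N > 0`: some `g` in `SL(2,ℂ)` sends `v` to `2v`,
whence `f(v,…,v) = 2^N f(v,…,v)`.
-/

open Finset Equiv

/-- The space `V = ℂ²`, on which `SL(2,ℂ)` acts by matrix-vector multiplication. -/
abbrev Plane : Type := Fin 2 → ℂ

/-- The determinant bracket `[v, w]`. -/
def planeBracket (v w : Plane) : ℂ := v 0 * w 1 - v 1 * w 0

/-- A perfect matching of `ι`, encoded as a fixed-point-free involution. -/
def IsPerfectMatching {ι : Type} (σ : Perm ι) : Prop := σ * σ = 1 ∧ ∀ i, σ i ≠ i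

/-- The product of the brackets `[x i, x (σ i)]` over the pairs of the matching `σ`, each pair
oriented by `i < σ i`. -/
def matchingProduct {ι : Type} [Fintype ι] [LinearOrder ι] (σ : Perm ι) (x : ι → Plane) : ℂ :=
  ∏ i ∈ univ.filter (fun i => i < σ i), planeBracket (x i) (x (σ i))

/-- The linear combinations of bracket products over perfect matchings, as functions on `V^ι`. -/
def matchingSpan (ι : Type) [Fintype ι] [LinearOrder ι] : Submodule ℂ ((ι → Plane) → ℂ) :=
  Submodule.span ℂ (matchingProduct '' {σ : Perm ι | IsPerfectMatching σ})

/-- Invariance under the diagonal action of `SL(2,ℂ)` on `V^ι`, all slots being copies of `V`. -/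
def IsSLInvariant {ι : Type} (f : (ι → Plane) → ℂ) : Prop :=
  ∀ (g : Matrix.SpecialLinearGroup (Fin 2) ℂ) (x : ι → Plane),
    f (fun i => (g : Matrix (Fin 2) (Fin 2) ℂ).mulVec (x i)) = f x

/-- Every vector is doubled by some element of `SL(2,ℂ)`: this is what kills invariant forms of
positive degree in one vector variable. -/
theorem exists_SL_mulVec_eq_two_smul (v : Plane) :
    ∃ g : Matrix.SpecialLinearGroup (Fin 2) ℂ,
      (g : Matrix (Fin 2) (Fin 2) ℂ).mulVec v = (2 : ℂ) • v := by
  by_cases h : v 0 = 0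
  · refine ⟨⟨!![1 / 2, 0; 0, 2], by simp [Matrix.det_fin_two]⟩, ?_⟩
    ext i
    fin_cases i <;> simp [Matrix.mulVec, dotProduct, Fin.sum_univ_two, h]
  · refine ⟨⟨!![2, 0; 3 * v 1 / (2 * v 0), 1 / 2], by simp [Matrix.det_fin_two]⟩, ?_⟩
    ext i
    fin_cases i
    · simp [Matrix.mulVec, dotProduct, Fin.sum_univ_two]
    · simp [Matrix.mulVec, dotProduct, Fin.sum_univ_two]
      field_simp
      ring

/-- Doubling `v` by an element of `SL(2,ℂ)` gives `f(v,…,v) = 2^N f(v,…,v)`. -/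
theorem IsSLInvariant.apply_diagonal_eq_zero {ι : Type} [Fintype ι] [Nonempty ι]
    {f : MultilinearMap ℂ (fun _ : ι => Plane) ℂ} (hf : IsSLInvariant f) (v : Plane) :
    f (fun _ => v) = 0 := by
  obtain ⟨g, hg⟩ := exists_SL_mulVec_eq_two_smul v
  have h := hf g (fun _ => v)
  simp only [hg] at h
  rw [f.map_smul_univ (fun _ => (2 : ℂ)) (fun _ => v)] at h
  simp only [prod_const, card_univ, smul_eq_mul] at h
  have h2 : (2 : ℂ) ^ Fintype.card ι ≠ 1 := by
    intro h3
    have h4 : (2 : ℕ) ^ Fintype.card ι = 1 := by exact_mod_cast h3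
    have := Nat.one_lt_two_pow (Fintype.card_ne_zero (α := ι))
    omega
  by_contra h0
  exact h2 (mul_right_cancel₀ h0 (h.trans (one_mul _).symm))

theorem continuous_multilinear {ι : Type} [Fintype ι]
    (f : MultilinearMap ℂ (fun _ : ι => Plane) ℂ) : Continuous f := by
  classical
  have hexp : (f : (ι → Plane) → ℂ) =
      fun x => ∑ r : ι → Fin 2, (∏ i, x i (r i)) * f (fun i => Pi.single (r i) 1) := by
    ext x
    have hx : x = fun i => ∑ j : Fin 2, x i j • (Pi.single j 1 : Plane) := by
      ext i k
      simp [Finset.sum_apply, Pi.single_apply]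
    conv_lhs => rw [hx]
    rw [f.map_sum]
    refine sum_congr rfl fun r _ => ?_
    rw [f.map_smul_univ (fun i => x i (r i)) (fun i => Pi.single (r i) 1), smul_eq_mul]
  rw [hexp]
  fun_prop

/-- Polarization: the symmetrization of `f` is the `n`-th derivative of `v ↦ f(v,…,v)`, so it
vanishes when that function does. -/
theorem sum_perm_eq_zero_of_diagonal_fin {n : ℕ}
    (f : MultilinearMap ℂ (fun _ : Fin n => Plane) ℂ) (hf : ∀ v, f (fun _ => v) = 0)
    (x : Fin n → Plane) : ∑ σ : Perm (Fin n), f (fun i => x (σ i)) = 0 := by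
  let F : ContinuousMultilinearMap ℂ (fun _ : Fin n => Plane) ℂ :=
    ⟨f, continuous_multilinear f⟩
  have h := F.iteratedFDeriv_comp_diagonal 0 x
  have hF : (fun v => F (fun _ => v)) = fun _ => 0 := funext hf
  rw [hF, iteratedFDeriv_fun_zero] at h
  exact h.symm

theorem sum_perm_eq_zero_of_diagonal {ι : Type} [Fintype ι] [DecidableEq ι]
    (f : MultilinearMap ℂ (fun _ : ι => Plane) ℂ) (hf : ∀ v, f (fun _ => v) = 0)
    (x : ι → Plane) : ∑ σ : Perm ι, f (fun i => x (σ i)) = 0 := by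
  let e := Fintype.equivFin ι
  have h := sum_perm_eq_zero_of_diagonal_fin (f.domDomCongr e) hf (fun i => x (e.symm i))
  rw [← h, ← Equiv.sum_comp e.permCongr]
  simp [MultilinearMap.domDomCongr_apply]

/-- Adding the pair `{i, j}` to a matching of the remaining slots multiplies its product by
`[x i, x j]`. -/
theorem matchingSpan.mul_bracket_mem {ι : Type} [Fintype ι] [LinearOrder ι] {i j : ι} (hij : i < j)
    {h : ({k : ι // k ≠ i ∧ k ≠ j} → Plane) → ℂ}
    (hh : h ∈ matchingSpan {k : ι // k ≠ i ∧ k ≠ j}) :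
    (fun x : ι → Plane => planeBracket (x i) (x j) * h (fun k => x k)) ∈ matchingSpan ι := by
  let L : (({k : ι // k ≠ i ∧ k ≠ j} → Plane) → ℂ) →ₗ[ℂ] ((ι → Plane) → ℂ) :=
    { toFun := fun h x => planeBracket (x i) (x j) * h (fun k => x k)
      map_add' := fun a b => by ext x; simp [mul_add]
      map_smul' := fun c a => by ext x; simp [mul_left_comm] }
  suffices matchingSpan {k : ι // k ≠ i ∧ k ≠ j} ≤ (matchingSpan ι).comap L from this hh
  refine Submodule.span_le.2 ?_
  rintro _ ⟨τ, ⟨hτ, hτ'⟩, rfl⟩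
  refine Submodule.subset_span ⟨Perm.ofSubtype τ * swap i j, ?_, ?_⟩
  all_goals
    have hi : (Perm.ofSubtype τ * swap i j) i = j := by
      simpa using Perm.ofSubtype_apply_of_not_mem τ (a := j) (by simp)
    have hj : (Perm.ofSubtype τ * swap i j) j = i := by
      simpa using Perm.ofSubtype_apply_of_not_mem τ (a := i) (by simp)
    have hk : ∀ k : {k : ι // k ≠ i ∧ k ≠ j}, (Perm.ofSubtype τ * swap i j) (k : ι) = τ k := by
      intro k
      rw [Perm.mul_apply, swap_apply_of_ne_of_ne k.2.1 k.2.2, Perm.ofSubtype_apply_coe]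
    generalize Perm.ofSubtype τ * swap i j = σ at hi hj hk
  · constructor
    · ext k
      by_cases h1 : k = i
      · subst h1; simp [hi, hj]
      by_cases h2 : k = j
      · subst h2; simp [hi, hj]
      have := hk ⟨k, h1, h2⟩
      simp only [] at this
      rw [Perm.mul_apply, this, hk, ← Perm.mul_apply, hτ]
      rfl
    · intro k
      by_cases h1 : k = i
      · subst h1; rw [hi]; exact hij.ne'
      by_cases h2 : k = j
      · subst h2; rw [hj]; exact hij.ne
      have := hk ⟨k, h1, h2⟩
      simp only [] at this
      rw [this]
      exact fun h => hτ' ⟨k, h1, h2⟩ (Subtype.ext h)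
  · ext x
    show matchingProduct σ x = planeBracket (x i) (x j) * matchingProduct τ (fun k => x k)
    have hfil : univ.filter (fun k => k < σ k) =
        insert i ((univ.filter (fun k => k < τ k)).map (Function.Embedding.subtype _)) := by
      ext k
      by_cases h1 : k = i
      · subst h1; simp [hi, hij]
      by_cases h2 : k = j
      · subst h2; simp [hj, hij.le, h1]
      have := hk ⟨k, h1, h2⟩
      simp only [] at this
      simp [this, h1, h2, ← Subtype.coe_lt_coe]
    rw [matchingProduct, hfil, prod_insert (by simp), prod_map, hi]
    simp [hk, matchingProduct]

/-- The family equal to `a` at `i`, to `b` at `j`, and to `y` at all other slots. -/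
def insertPair {ι : Type} [DecidableEq ι] (i j : ι) (y : {k : ι // k ≠ i ∧ k ≠ j} → Plane)
    (a b : Plane) : ι → Plane :=
  fun k => if h : k ≠ i ∧ k ≠ j then y ⟨k, h⟩ else if k = i then a else b

theorem insertPair_restrict {ι : Type} [DecidableEq ι] (i j : ι) (x : ι → Plane) :
    insertPair i j (fun k => x k) (x i) (x j) = x := by
  ext1 k
  unfold insertPair
  grind

theorem insertPair_comp_swap {ι : Type} [DecidableEq ι] {i j : ι} (hij : i ≠ j)
    (y : {k : ι // k ≠ i ∧ k ≠ j} → Plane) (a b : Plane) :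
    (fun k => insertPair i j y a b (swap i j k)) = insertPair i j y b a := by
  ext1 k
  unfold insertPair
  by_cases h1 : k = i
  · subst h1; simp [hij.symm]
  by_cases h2 : k = j
  · subst h2; simp [h1]
  simp [swap_apply_of_ne_of_ne h1 h2, h1, h2]

theorem map_insertPair_left {ι : Type} [DecidableEq ι] {i j : ι}
    (f : MultilinearMap ℂ (fun _ : ι => Plane) ℂ)
    (y : {k : ι // k ≠ i ∧ k ≠ j} → Plane) (a b : Plane) :
    f (insertPair i j y a b) =
      a 0 * f (insertPair i j y ![1, 0] b) + a 1 * f (insertPair i j y ![0, 1] b) := by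
  have key : ∀ c, insertPair i j y c b = Function.update (insertPair i j y 0 b) i c := by
    intro c
    ext1 k
    by_cases h : k = i
    · subst h; simp [insertPair]
    · simp [insertPair, h]
  have ha : a = a 0 • ![1, 0] + a 1 • ![0, 1] := by
    ext k; fin_cases k <;> simp
  rw [key a, key ![1, 0], key ![0, 1]]
  conv_lhs => rw [ha]
  rw [f.map_update_add, f.map_update_smul, f.map_update_smul]
  rfl

theorem map_insertPair_right {ι : Type} [DecidableEq ι] {i j : ι} (hij : i ≠ j)
    (f : MultilinearMap ℂ (fun _ : ι => Plane) ℂ)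
    (y : {k : ι // k ≠ i ∧ k ≠ j} → Plane) (a b : Plane) :
    f (insertPair i j y a b) =
      b 0 * f (insertPair i j y a ![1, 0]) + b 1 * f (insertPair i j y a ![0, 1]) := by
  have h := map_insertPair_left (f.domDomCongr (swap i j)) y b a
  simpa [MultilinearMap.domDomCongr_apply, insertPair_comp_swap hij] using h

/-- The form `y ↦ f(e₀, e₁, y) - f(e₁, e₀, y)` in the slots other than `i` and `j`, where the first
two arguments are those in slots `i` and `j`. -/
def contractPair {ι : Type} [DecidableEq ι] (i j : ι)
    (f : MultilinearMap ℂ (fun _ : ι => Plane) ℂ) :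
    MultilinearMap ℂ (fun _ : {k : ι // k ≠ i ∧ k ≠ j} => Plane) ℂ :=
  f.domDomRestrict (fun k => k ≠ i ∧ k ≠ j)
      (fun k => if (k : ι) = i then ![1, 0] else ![0, 1]) -
    f.domDomRestrict (fun k => k ≠ i ∧ k ≠ j)
      (fun k => if (k : ι) = i then ![0, 1] else ![1, 0])

theorem contractPair_apply {ι : Type} [DecidableEq ι] (i j : ι)
    (f : MultilinearMap ℂ (fun _ : ι => Plane) ℂ) (y : {k : ι // k ≠ i ∧ k ≠ j} → Plane) :
    contractPair i j f y =
      f (insertPair i j y ![1, 0] ![0, 1]) - f (insertPair i j y ![0, 1] ![1, 0]) := rfl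

/-- The part of `f` antisymmetric in slots `i`, `j` is divisible by the bracket of these slots, since
an alternating bilinear form on `ℂ²` is a multiple of the determinant. -/
theorem map_insertPair_sub_swap {ι : Type} [DecidableEq ι] {i j : ι} (hij : i ≠ j)
    (f : MultilinearMap ℂ (fun _ : ι => Plane) ℂ)
    (y : {k : ι // k ≠ i ∧ k ≠ j} → Plane) (a b : Plane) :
    f (insertPair i j y a b) - f (insertPair i j y b a) =
      planeBracket a b * contractPair i j f y := by
  rw [contractPair_apply, map_insertPair_left f y a b, map_insertPair_left f y b a,
    map_insertPair_right hij f y _ b, map_insertPair_right hij f y _ b,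
    map_insertPair_right hij f y _ a, map_insertPair_right hij f y _ a, planeBracket]
  ring

/-- The difference `f - f ∘ (i j)` is invariant and equals bracket times contraction; evaluating at
`e₀, e₁` in slots `i, j`, where the bracket stays `1` under `g`, isolates the contraction. -/
theorem IsSLInvariant.contractPair {ι : Type} [DecidableEq ι] {i j : ι} (hij : i ≠ j)
    {f : MultilinearMap ℂ (fun _ : ι => Plane) ℂ} (hf : IsSLInvariant f) :
    IsSLInvariant (contractPair i j f) := by
  intro g y
  have hmove : ∀ a b, (fun k => (g : Matrix (Fin 2) (Fin 2) ℂ).mulVec (insertPair i j y a b k)) =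
      insertPair i j (fun k => (g : Matrix (Fin 2) (Fin 2) ℂ).mulVec (y k))
        ((g : Matrix (Fin 2) (Fin 2) ℂ).mulVec a) ((g : Matrix (Fin 2) (Fin 2) ℂ).mulVec b) := by
    intro a b
    ext1 k
    unfold insertPair
    grind
  have h1 := hf g (insertPair i j y ![1, 0] ![0, 1])
  have h2 := hf g (insertPair i j y ![0, 1] ![1, 0])
  rw [hmove] at h1 h2
  have hdet : planeBracket ((g : Matrix (Fin 2) (Fin 2) ℂ).mulVec ![1, 0])
      ((g : Matrix (Fin 2) (Fin 2) ℂ).mulVec ![0, 1]) = 1 := by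
    have := g.2
    rw [Matrix.det_fin_two] at this
    simp [planeBracket, Matrix.mulVec, dotProduct, Fin.sum_univ_two]
    linear_combination this
  rw [contractPair_apply i j f y, ← h1, ← h2, map_insertPair_sub_swap hij, hdet, one_mul]

theorem IsSLInvariant.domDomCongr {ι : Type} {f : MultilinearMap ℂ (fun _ : ι => Plane) ℂ}
    (hf : IsSLInvariant f) (σ : Perm ι) : IsSLInvariant (f.domDomCongr σ) :=
  fun g x => hf g (fun k => x (σ k))

/-- The first fundamental theorem when all slots are copies of `V`, by induction on their number. -/
theorem IsSLInvariant.mem_matchingSpan : ∀ (N : ℕ) {ι : Type} [Fintype ι] [LinearOrder ι]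
    (_ : Fintype.card ι = N) {f : MultilinearMap ℂ (fun _ : ι => Plane) ℂ}
    (_ : IsSLInvariant f), (f : (ι → Plane) → ℂ) ∈ matchingSpan ι := by
  intro N
  induction N using Nat.strong_induction_on with
  | _ N ih =>
  intro ι _ _ hN f hf
  rcases isEmpty_or_nonempty ι with hι | hι
  · have h1 : matchingProduct (1 : Perm ι) ∈ matchingSpan ι :=
      Submodule.subset_span ⟨1, ⟨one_mul 1, fun i => isEmptyElim i⟩, rfl⟩
    convert (matchingSpan ι).smul_mem (f 0) h1 using 1
    ext x
    rw [Subsingleton.elim x 0]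
    simp [matchingProduct]
  have hlt : ∀ i j : ι, i < j → ∀ f : MultilinearMap ℂ (fun _ : ι => Plane) ℂ, IsSLInvariant f →
      (f : (ι → Plane) → ℂ) - f.domDomCongr (swap i j) ∈ matchingSpan ι := by
    intro i j hij f hf
    have hcard : Fintype.card {k : ι // k ≠ i ∧ k ≠ j} < N :=
      hN ▸ Fintype.card_subtype_lt (x := i) (by simp)
    have hmem := matchingSpan.mul_bracket_mem hij (ih _ hcard rfl (hf.contractPair hij.ne))
    convert hmem using 1
    ext x
    rw [← map_insertPair_sub_swap hij.ne, ← insertPair_comp_swap hij.ne (fun k => x k) (x i) (x j),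
      insertPair_restrict]
    rfl
  have hswap : ∀ i j : ι, i ≠ j → ∀ f : MultilinearMap ℂ (fun _ : ι => Plane) ℂ,
      IsSLInvariant f → (f : (ι → Plane) → ℂ) - f.domDomCongr (swap i j) ∈ matchingSpan ι := by
    intro i j hij
    rcases hij.lt_or_gt with h | h
    · exact hlt i j h
    · rw [swap_comm]
      exact hlt j i h
  have hperm : ∀ σ : Perm ι, (f : (ι → Plane) → ℂ) - f.domDomCongr σ ∈ matchingSpan ι := by
    intro σ
    induction σ using Perm.swap_induction_on with
    | one =>
      convert (matchingSpan ι).zero_mem using 1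
      ext x
      simp [MultilinearMap.domDomCongr_apply]
    | swap_mul σ i j hij hσ =>
      convert (matchingSpan ι).add_mem hσ (hswap i j hij _ (hf.domDomCongr σ)) using 1
      ext x
      simp [MultilinearMap.domDomCongr_apply]
  have hsum : ∑ σ : Perm ι, ((f : (ι → Plane) → ℂ) - f.domDomCongr σ) ∈ matchingSpan ι :=
    Submodule.sum_mem _ fun σ _ => hperm σ
  -- The sum over `σ` is `N! • f`, as the symmetrization of `f` vanishes by polarization.
  have hfact : ((Fintype.card (Perm ι) : ℕ) : ℂ) ≠ 0 := Nat.cast_ne_zero.2 Fintype.card_ne_zero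
  convert (matchingSpan ι).smul_mem ((Fintype.card (Perm ι) : ℂ)⁻¹) hsum using 1
  ext x
  have h0 := sum_perm_eq_zero_of_diagonal f hf.apply_diagonal_eq_zero x
  simp only [Pi.smul_apply, Finset.sum_apply, Pi.sub_apply]
  rw [sum_sub_distrib]
  simp only [MultilinearMap.domDomCongr_apply, h0, sum_const, card_univ, nsmul_eq_mul, sub_zero,
    smul_eq_mul]
  rw [inv_mul_cancel_left₀ hfact]

/-- The isomorphism `V* → V` for which `[dualToPlane u, w] = ⟨u, w⟩`. -/
def dualToPlane : Plane →ₗ[ℂ] Plane where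
  toFun v := ![v 1, -v 0]
  map_add' v w := by ext k; fin_cases k <;> simp [add_comm]
  map_smul' c v := by ext k; fin_cases k <;> simp

/-- The inverse of `dualToPlane`; it intertwines the standard action with the dual one. -/
def planeToDual : Plane →ₗ[ℂ] Plane where
  toFun v := ![-v 1, v 0]
  map_add' v w := by ext k; fin_cases k <;> simp [add_comm]
  map_smul' c v := by ext k; fin_cases k <;> simp

theorem planeToDual_mulVec (g : Matrix.SpecialLinearGroup (Fin 2) ℂ) (v : Plane) :
    planeToDual ((g : Matrix (Fin 2) (Fin 2) ℂ).mulVec v) =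
      (((g⁻¹ : Matrix.SpecialLinearGroup (Fin 2) ℂ) :
        Matrix (Fin 2) (Fin 2) ℂ).transpose).mulVec (planeToDual v) := by
  ext k
  fin_cases k <;>
    simp [planeToDual, Matrix.SpecialLinearGroup.coe_inv, Matrix.adjugate_fin_two, Matrix.mulVec,
      dotProduct, Fin.sum_univ_two] <;> ring

theorem planeToDual_dualToPlane (v : Plane) : planeToDual (dualToPlane v) = v := by
  ext k
  fin_cases k <;> simp [planeToDual, dualToPlane]


/-- **First Fundamental Theorem for `SL(2,ℂ)`.**
Let `V = ℂ²` with the standard `SL(2,ℂ)`-action and the dual action on `V*`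
(both identified with `ℂ²`, the dual via the dual basis, so that `g` acts on `V`
by `w ↦ g·w` and on `V*` by `v* ↦ (g⁻¹)ᵀ·v*`).  Every multilinear functional
`f : (V*)^m × V^n → ℂ` (encoded as an `(m+n)`-linear form whose first `m` slots are
`V*`-slots and whose last `n` slots are `V`-slots) invariant under the diagonal action
is a linear combination, over perfect matchings `σ` of the `m+n` slots
(fixed-point-free involutions), of products of the elementary invariants:
the dual pairing `⟨v*, w⟩` on mixed pairs, and the determinant brackets
`[v_i*, v_j*]`, `[w_i, w_j]` on like pairs, each slot occurring exactly once. -/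
theorem first_fundamental_theorem_SL2 (m n : ℕ)
    (f : MultilinearMap ℂ (fun _ : Fin (m + n) => (Fin 2 → ℂ)) ℂ)
    (hinv : ∀ g : Matrix.SpecialLinearGroup (Fin 2) ℂ,
      ∀ x : Fin (m + n) → Fin 2 → ℂ,
        f (fun i => if (i : ℕ) < m
            then (((g⁻¹ : Matrix.SpecialLinearGroup (Fin 2) ℂ) :
                Matrix (Fin 2) (Fin 2) ℂ).transpose).mulVec (x i)
            else ((g : Matrix (Fin 2) (Fin 2) ℂ)).mulVec (x i)) = f x) :
    ∃ c : Equiv.Perm (Fin (m + n)) → ℂ,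
      ∀ x : Fin (m + n) → Fin 2 → ℂ,
        f x =
          ∑ σ ∈ Finset.univ.filter
              (fun σ : Equiv.Perm (Fin (m + n)) => σ * σ = 1 ∧ ∀ i, σ i ≠ i),
            c σ * ∏ i ∈ Finset.univ.filter (fun i : Fin (m + n) => i < σ i),
              (if ((i : ℕ) < m ↔ ((σ i : Fin (m + n)) : ℕ) < m)
                then x i 0 * x (σ i) 1 - x i 1 * x (σ i) 0
                else x i 0 * x (σ i) 0 + x i 1 * x (σ i) 1) := by
  -- Transport the starred slots to `V`, so that all slots carry the standard action.
  let f' : MultilinearMap ℂ (fun _ : Fin (m + n) => Plane) ℂ :=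
    f.compLinearMap (fun i => if (i : ℕ) < m then planeToDual else LinearMap.id)
  have hf' : IsSLInvariant f' := by
    intro g x
    have h := hinv g (fun i => (if (i : ℕ) < m then planeToDual else LinearMap.id) (x i))
    simp only [f', MultilinearMap.compLinearMap_apply]
    rw [← h]
    congr 1
    ext1 i
    by_cases hi : (i : ℕ) < m
    · simp only [hi, if_true, planeToDual_mulVec]
    · simp only [hi, if_false, LinearMap.id_apply]
  have hmem := hf'.mem_matchingSpan _ rfl
  have hset : {σ : Perm (Fin (m + n)) | IsPerfectMatching σ} =
      ((univ.filter (fun σ : Perm (Fin (m + n)) => σ * σ = 1 ∧ ∀ i, σ i ≠ i) :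
        Finset (Perm (Fin (m + n)))) : Set (Perm (Fin (m + n)))) := by
    ext σ
    simp [IsPerfectMatching]
  rw [matchingSpan, hset, Submodule.mem_span_image_finset_iff_exists_fun'] at hmem
  obtain ⟨c, hc⟩ := hmem
  refine ⟨c, fun x => ?_⟩
  let x' : Fin (m + n) → Plane := fun i => if (i : ℕ) < m then dualToPlane (x i) else x i
  have hx' : f x = f' x' := by
    simp only [f', x', MultilinearMap.compLinearMap_apply]
    congr 1
    ext1 i
    by_cases hi : (i : ℕ) < m
    · simp only [hi, if_true, planeToDual_dualToPlane]
    · simp only [hi, if_false, LinearMap.id_apply]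
  rw [hx', ← hc, Finset.sum_apply]
  refine sum_congr rfl fun σ _ => ?_
  rw [Pi.smul_apply, smul_eq_mul, matchingProduct]
  congr 1
  refine prod_congr rfl fun i hi => ?_
  -- In a mixed pair the smaller slot `i` is the starred one, so the pairing appears with sign `+`.
  have hlt : (i : ℕ) < (σ i : ℕ) := (mem_filter.1 hi).2
  by_cases h1 : (i : ℕ) < m <;> by_cases h2 : (σ i : ℕ) < m
  · simp [x', h1, h2, planeBracket, dualToPlane]
    ring
  · simp [x', h1, h2, planeBracket, dualToPlane]
    ring
  · omega
  · simp [x', h1, h2, planeBracket]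
end

section
/- (Outgoing-edge statistic determines a noncrossing pairing.) Let π be an m-partite noncrossing pair partition of [md]. Call an edge (block) {i, j} with i < j outgoing for the k-th interval if i lies in the k-th interval {(k−1)d+1, ..., kd}, and incoming for the interval containing j. Then the map sending π to the tuple (s₁(π), ..., s_m(π)), where s_k(π) is the number of edges outgoing from the k-th interval, is injective on the set of m-partite noncrossing pair partitions of [md]. (In a noncrossing pairing, within each interval all incoming edges precede all outgoing edges, so the outgoing-edge counts uniquely determine the partition.) -/
/-- The number of edges outgoing from the `k`-th interval (0-indexed; the interval of
the `i` with `i / d = k`): the number of blocks of `π` whose minimal element lies in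
the `k`-th interval.  (An edge `{i, j}` with `i < j` is outgoing for the interval
containing `i` and incoming for the interval containing `j`.) -/
def outCount {n : ℕ} (d : ℕ) (π : Finpartition (Finset.univ : Finset (Fin n)))
    (k : ℕ) : ℕ :=
  (π.parts.filter (fun B => ∃ i : Fin n, i ∈ B ∧ (i : ℕ) / d = k ∧ ∀ j ∈ B, i ≤ j)).card

/-- `f` is the partner map of the `m`-partite noncrossing pair partition `π` with interval
length `d`: the fixed-point-free involution whose orbits are the blocks of `π`. The last three
fields record that `π` is noncrossing, that it is multipartite, and that its outgoing-edge counts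
are the numbers of `i < f i` in the intervals. -/
structure IsPartner {n : ℕ} (d : ℕ) (π : Finpartition (Finset.univ : Finset (Fin n)))
    (f : Fin n → Fin n) : Prop where
  part_eq : ∀ i, π.part i = {i, f i}
  invol : ∀ i, f (f i) = i
  ne : ∀ i, f i ≠ i
  noncross : ∀ i i', i < i' → i' < f i → f i < f i' → False
  partite : ∀ i, (f i : ℕ) / d ≠ (i : ℕ) / d
  count : ∀ k, outCount d π k =
    (Finset.univ.filter (fun i : Fin n => (i : ℕ) / d = k ∧ i < f i)).card

theorem exists_partner {n d : ℕ} (π : Finpartition (Finset.univ : Finset (Fin n)))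
    (h : IsNoncrossing π ∧ IsPairPartition π ∧ IsMPartite d π) : ∃ f, IsPartner d π f := by
  obtain ⟨hn, hp, hm⟩ := h
  have hmem : ∀ i, i ∈ π.part i := fun i => π.mem_part (Finset.mem_univ i)
  have hparts : ∀ i, π.part i ∈ π.parts := fun i => π.part_mem.2 (Finset.mem_univ i)
  have key : ∀ i, ∃ j, j ≠ i ∧ π.part i = {i, j} := by
    intro i
    obtain ⟨a, b, hab, he⟩ := Finset.card_eq_two.1 (hp _ (hparts i))
    have hi := hmem i
    rw [he] at hi
    rcases Finset.mem_insert.1 hi with rfl | hi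
    · exact ⟨b, hab.symm, he⟩
    · rw [Finset.mem_singleton] at hi
      subst hi
      exact ⟨a, hab, by rw [he, Finset.pair_comm]⟩
  choose f hne hf using key
  have hpf : ∀ i, π.part (f i) = π.part i := fun i =>
    π.part_eq_of_mem (hparts i) (by rw [hf i]; simp)
  have hinv : ∀ i, f (f i) = i := by
    intro i
    have hi := hmem i
    rw [← hpf i, hf (f i)] at hi
    rcases Finset.mem_insert.1 hi with h1 | h1
    · exact absurd h1.symm (hne i)
    · exact (Finset.mem_singleton.1 h1).symm
  have hsame : ∀ i, SameBlock π i (f i) := fun i =>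
    ⟨π.part i, hparts i, hmem i, by rw [hf i]; simp⟩
  refine ⟨f, hf, hinv, hne, ?_, ?_, ?_⟩
  · intro i i' h1 h2 h3
    obtain ⟨B, hB, hi, hi'⟩ := hn i i' (f i) (f i') h1 h2 h3 (hsame i) (hsame i')
    rw [← π.part_eq_of_mem hB hi, hf i] at hi'
    rcases Finset.mem_insert.1 hi' with h4 | h4
    · exact h1.ne' h4
    · exact h2.ne (Finset.mem_singleton.1 h4)
  · intro i hi
    have := Finset.card_le_one.1 (hm _ (hparts i) ((i : ℕ) / d)) (f i) (by simp [hf i, hi]) i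
      (by simp [hf i])
    exact hne i this
  · intro k
    symm
    unfold outCount
    -- An opener is sent to its block, of which it is the minimum.
    refine Finset.card_bij (fun i _ => π.part i) ?_ ?_ ?_
    · intro i hi
      simp only [Finset.mem_filter, Finset.mem_univ, true_and] at hi
      refine Finset.mem_filter.2 ⟨hparts i, i, hmem i, hi.1, fun j hj => ?_⟩
      rw [hf i] at hj
      rcases Finset.mem_insert.1 hj with rfl | hj
      · exact le_rfl
      · rw [Finset.mem_singleton.1 hj]; exact hi.2.le
    · intro i hi j hj hij
      simp only [Finset.mem_filter, Finset.mem_univ, true_and] at hi hj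
      have hj' := hmem j
      rw [← hij, hf i] at hj'
      rcases Finset.mem_insert.1 hj' with h1 | h1
      · exact h1.symm
      · rw [Finset.mem_singleton] at h1
        subst h1
        rw [hinv i] at hj
        exact absurd hi.2 hj.2.asymm
    · intro B hB
      obtain ⟨hB, i, hi, hk, hle⟩ := Finset.mem_filter.1 hB
      have hBi := π.part_eq_of_mem hB hi
      refine ⟨i, ?_, hBi⟩
      simp only [Finset.mem_filter, Finset.mem_univ, true_and]
      refine ⟨hk, lt_of_le_of_ne (hle _ ?_) (hne i).symm⟩
      rw [← hBi, hf i]; simp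

/-- Within an interval, all closers precede all openers. -/
theorem IsPartner.opener_of_lt {n d : ℕ} {π : Finpartition (Finset.univ : Finset (Fin n))}
    {f : Fin n → Fin n} (h : IsPartner d π f) {i j : Fin n} (hij : i < j)
    (hd : (i : ℕ) / d = (j : ℕ) / d) (hi : i < f i) : j < f j := by
  by_contra hj
  have hj : f j < j := lt_of_le_of_ne (not_lt.1 hj) (h.ne j)
  have h1 : f j < i := by
    by_contra hc
    have a := Nat.div_le_div_right (c := d) (Fin.le_def.1 (not_lt.1 hc))
    have b := Nat.div_le_div_right (c := d) (Fin.le_def.1 hj.le)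
    exact h.partite j (by omega)
  have h2 : j < f i := by
    by_contra hc
    have a := Nat.div_le_div_right (c := d) (Fin.le_def.1 (not_lt.1 hc))
    have b := Nat.div_le_div_right (c := d) (Fin.le_def.1 hi.le)
    exact h.partite i (by omega)
  exact h.noncross (f j) i h1 (by rwa [h.invol]) (by rwa [h.invol])

/-- In each interval the two sets of openers are final segments of the same cardinality. -/
theorem opener_iff {n d : ℕ} {π π' : Finpartition (Finset.univ : Finset (Fin n))}
    {f g : Fin n → Fin n} (hf : IsPartner d π f) (hg : IsPartner d π' g)
    (h : ∀ k : ℕ, outCount d π k = outCount d π' k) (i : Fin n) : i < f i ↔ i < g i := by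
  let S (u : Fin n → Fin n) : Finset (Fin n) :=
    Finset.univ.filter (fun j : Fin n => (j : ℕ) / d = (i : ℕ) / d ∧ j < u j)
  have hS : ∀ u j, j ∈ S u ↔ (j : ℕ) / d = (i : ℕ) / d ∧ j < u j := by
    intro u j; simp [S]
  have hcard : (S f).card = (S g).card := by
    have := h ((i : ℕ) / d)
    rwa [hf.count, hg.count] at this
  have hEq : S f = S g := by
    by_cases hsub : S f ⊆ S g
    · exact Finset.eq_of_subset_of_card_le hsub hcard.ge
    · obtain ⟨a, ha, ha'⟩ := Finset.not_subset.1 hsub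
      refine (Finset.eq_of_subset_of_card_le (fun b hb => ?_) hcard.le).symm
      rw [hS] at ha ha' hb ⊢
      refine ⟨hb.1, ?_⟩
      rcases lt_trichotomy a b with hab | rfl | hab
      · exact hf.opener_of_lt hab (by omega) ha.2
      · exact ha.2
      · exact absurd ⟨ha.1, hg.opener_of_lt hab (by omega) hb.2⟩ ha'
  have := hS f i
  rw [hEq, hS g i] at this
  tauto

/-- If all closers before the closer `j` have the same partner under `f` and `g`, then the
`f`-partner of `j` is not to the left of its `g`-partner: otherwise `g j` would be an opener whose
`f`-edge either ends before `j`, or crosses the edge `{f j, j}`. -/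
theorem not_partner_lt {n d : ℕ} {π π' : Finpartition (Finset.univ : Finset (Fin n))}
    {f g : Fin n → Fin n} (hf : IsPartner d π f) (hg : IsPartner d π' g)
    (hO : ∀ i, i < f i ↔ i < g i) (j : Fin n) (hgj : g j < j)
    (ih : ∀ j' < j, f j' < j' → f j' = g j') : ¬ f j < g j := by
  intro hlt
  have hop : g j < f (g j) := (hO _).2 (by rwa [hg.invol])
  rcases lt_trichotomy (f (g j)) j with h1 | h1 | h1
  · have h2 := ih _ h1 (by rwa [hf.invol])
    rw [hf.invol] at h2
    have h3 := congrArg g h2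
    rw [hg.invol, hg.invol] at h3
    exact h1.ne h3.symm
  · have h2 := congrArg f h1
    rw [hf.invol] at h2
    exact hlt.ne h2.symm
  · exact hf.noncross (f j) (g j) hlt (by rwa [hf.invol]) (by rwa [hf.invol])

theorem partner_eq {n d : ℕ} {π π' : Finpartition (Finset.univ : Finset (Fin n))}
    {f g : Fin n → Fin n} (hf : IsPartner d π f) (hg : IsPartner d π' g)
    (hO : ∀ i, i < f i ↔ i < g i) : f = g := by
  have hC : ∀ i, f i < i ↔ g i < i := by
    intro i
    have h1 := hO i
    have h2 := hf.ne i
    have h3 := hg.ne i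
    constructor
    · intro h
      exact lt_of_le_of_ne (not_lt.1 fun hc => h.asymm (h1.2 hc)) h3
    · intro h
      exact lt_of_le_of_ne (not_lt.1 fun hc => h.asymm (h1.1 hc)) h2
  have closer : ∀ j, f j < j → f j = g j := by
    intro j
    induction j using WellFoundedLT.induction with
    | ind j ih =>
      intro hj
      have hj' := (hC j).1 hj
      refine le_antisymm (not_lt.1 ?_) (not_lt.1 ?_)
      · exact not_partner_lt hg hf (fun i => (hO i).symm) j hj
          fun j' h1 h2 => (ih j' h1 ((hC j').2 h2)).symm
      · exact not_partner_lt hf hg hO j hj' ih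
  funext i
  rcases lt_or_gt_of_ne (hf.ne i) with h | h
  · exact closer i h
  · have h1 := closer (f i) (by rwa [hf.invol])
    rw [hf.invol] at h1
    have h2 := congrArg g h1
    rw [hg.invol] at h2
    exact h2.symm

/-- **The outgoing-edge statistic determines a noncrossing pairing.**  The map sending
an `m`-partite noncrossing pair partition `π` of `{1, ..., md}` to the tuple of its
outgoing-edge counts `(s₁(π), ..., s_m(π))` is injective. -/
theorem noncrossing_pairing_determined_by_outCount (m d : ℕ)
    (π π' : Finpartition (Finset.univ : Finset (Fin (m * d))))
    (hπ : IsNoncrossing π ∧ IsPairPartition π ∧ IsMPartite d π)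
    (hπ' : IsNoncrossing π' ∧ IsPairPartition π' ∧ IsMPartite d π')
    (h : ∀ k : ℕ, outCount d π k = outCount d π' k) : π = π' := by
  obtain ⟨f, hf⟩ := exists_partner π hπ
  obtain ⟨g, hg⟩ := exists_partner π' hπ'
  obtain rfl := partner_eq hf hg (opener_iff hf hg h)
  have hpart : ∀ i, π.part i = π'.part i := fun i => by rw [hf.part_eq, hg.part_eq]
  refine Finpartition.ext (Finset.ext fun B => ⟨fun hB => ?_, fun hB => ?_⟩)
  · obtain ⟨i, hi⟩ := π.nonempty_of_mem_parts hB
    rw [← π.part_eq_of_mem hB hi, hpart]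
    exact π'.part_mem.2 (Finset.mem_univ i)
  · obtain ⟨i, hi⟩ := π'.nonempty_of_mem_parts hB
    rw [← π'.part_eq_of_mem hB hi, ← hpart]
    exact π.part_mem.2 (Finset.mem_univ i)
end
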